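/- Let p be a prime, r ≥ 1, and e_1 ≤ e_2 ≤ ... ≤ e_d positive integers with p^{e_d} ≥ 1 + Σ_{i=1}^{d−1}(p^{e_i} − 1). Then for the p-group G = C_{p^{e_1}} × ... × C_{p^{e_d}}, the r-wise Davenport constant is D_r(G) = r·p^{e_d} + Σ_{i=1}^{d−1} p^{e_i} − d + 1. -/

import Mathlib

/-! The value is `r * n + m` with `n = p ^ e_{d+1}` the exponent and `m = ∑_{i ≤ d} (p ^ e_i - 1)`.

*Olson's theorem.* In the group algebra `𝔽_p[G]` let `I` be the ideal generated by the elements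
`1 - X^{x_i}`, where the `x_i` generate `G` and `p ^ e_i • x_i = 0`. Then `(1 - X^{x_i}) ^ p ^ e_i = 0`
by Frobenius, so `I ^ (1 + ∑ (p ^ e_i - 1)) = 0`, while `1 - X^g ∈ I` for every `g`. Hence
`∏ (1 - X^{g_j}) = 0` for any long enough sequence; if no nonempty subsequence summed to zero, the
coefficient of this product at `0` would be `1` (`olson_family`).

*Upper bound.* A sequence of length at least `2n + m - 1` has a nonempty zero-sum subsequence of length
at most `n` (`exists_short`): Olson's theorem in `G × C_n`, applied to the terms `(g, 1)`, gives a
zero-sum subsequence whose length is `n` or `2n`, since `m + 1 ≤ n` rules out `3n`. One of length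
`2n > n + m` minus a term contains, by Olson's theorem in `G`, a proper zero-sum subsequence, and either
it or its complement has length at most `n`. Removing short zero-sum subsequences one by one reduces
`r` to `1`, which is Olson's theorem (`hasDZS_of_le_card`).

*Lower bound.* Take the unit vector of index `i ≤ d` with multiplicity `p ^ e_i - 1` and the last one
with multiplicity `r * n - 1`. A nonempty zero-sum subsequence contains the last unit vector at least
`n` times, so there cannot be `r` disjoint ones (`not_hasDZS`).
-/

/-- `S` contains `r` pairwise disjoint nonempty zero-sum subsequences. -/
def HasDZS {G : Type*} [AddCommGroup G] (r : ℕ) (S : Multiset G) : Prop :=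
  ∃ L : List (Multiset G), L.length = r ∧ (∀ T ∈ L, T ≠ 0 ∧ T.sum = 0) ∧ L.sum ≤ S

/-- The `r`-wise Davenport constant: the least `k > 0` such that every sequence of
length at least `k` over `G` has `r` pairwise disjoint nonempty zero-sum subsequences. -/
noncomputable def DavR (G : Type*) [AddCommGroup G] (r : ℕ) : ℕ :=
  sInf {k | 0 < k ∧ ∀ S : Multiset G, k ≤ Multiset.card S → HasDZS r S}

open Finset in
/-- The nilpotency index of a finite sum of nilpotent elements, with the sharp bound. It is used in the
semiring of ideals, where the sum is the supremum. -/
theorem sum_pow_eq_zero {R ι : Type*} [CommSemiring R] (s : Finset ι) (a : ι → R) (n : ι → ℕ)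
    (hn : ∀ i, 0 < n i) (h : ∀ i, a i ^ n i = 0) :
    (∑ i ∈ s, a i) ^ (1 + ∑ i ∈ s, (n i - 1)) = 0 := by
  classical
  induction s using Finset.induction_on with
  | empty => simp
  | insert i s hi ih =>
    rw [sum_insert hi, sum_insert hi]
    refine (Commute.all _ _).add_pow_eq_zero_of_add_le_succ_of_pow_eq_zero (h i) ih ?_
    have := hn i
    omega

open AddMonoidAlgebra in
/-- Modulo the ideal generated by `1 - X^{x_i}`, every group element becomes trivial as soon as the
`x_i` generate the group. -/
theorem one_sub_single_mem {R G ι : Type*} [CommRing R] [AddCommGroup G] (x : ι → G)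
    (hgen : AddSubgroup.closure (Set.range x) = ⊤) (I : Ideal (AddMonoidAlgebra R G))
    (hI : ∀ i, 1 - single (x i) (1 : R) ∈ I) (g : G) : 1 - single g (1 : R) ∈ I := by
  have hg : g ∈ AddSubgroup.closure (Set.range x) := by simp [hgen]
  induction hg using AddSubgroup.closure_induction with
  | mem y hy => obtain ⟨i, rfl⟩ := hy; exact hI i
  | zero => simp [← one_def]
  | add y z _ _ hy hz =>
    have h : 1 - single (y + z) (1 : R)
        = (1 - single y 1) + single y 1 * (1 - single z 1) := by
      rw [mul_sub, single_mul_single]; simp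
    rw [h]
    exact I.add_mem hy (I.mul_mem_left _ hz)
  | neg y _ hy =>
    have h : 1 - single (-y) (1 : R) = -(single (-y) 1 * (1 - single y 1)) := by
      rw [mul_sub, single_mul_single]; simp [← one_def]
    rw [h]
    exact I.neg_mem (I.mul_mem_left _ hy)

open AddMonoidAlgebra in
/-- The upper bound in Olson's theorem, for a family of terms indexed by a finite type. The group is
given by generators `x i` with `p ^ e i • x i = 0`. -/
theorem olson_family {G ι κ : Type*} [AddCommGroup G] [Fintype ι] [Fintype κ] (p : ℕ)
    (hp : p.Prime) (x : ι → G) (e : ι → ℕ) (hx : ∀ i, p ^ e i • x i = 0)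
    (hgen : AddSubgroup.closure (Set.range x) = ⊤) (f : κ → G)
    (hcard : 1 + ∑ i, (p ^ e i - 1) ≤ Fintype.card κ) :
    ∃ T : Finset κ, T.Nonempty ∧ ∑ j ∈ T, f j = 0 := by
  classical
  have : Fact p.Prime := ⟨hp⟩
  have : CharP (AddMonoidAlgebra (ZMod p) G) p :=
    (Algebra.charP_iff (ZMod p) (AddMonoidAlgebra (ZMod p) G) p).1 inferInstance
  by_contra! hne
  let J : ι → Ideal (AddMonoidAlgebra (ZMod p) G) := fun i =>
    Ideal.span {1 - single (x i) (1 : ZMod p)}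
  have hJ : ∀ i, J i ^ p ^ e i = 0 := by
    intro i
    simp only [J]
    rw [Ideal.span_singleton_pow, sub_pow_char_pow, single_pow, hx]
    simp [← one_def]
  have hI := sum_pow_eq_zero Finset.univ J (fun i => p ^ e i) (fun i => pow_pos hp.pos _) hJ
  have hprod : ∏ j, (1 - single (f j) (1 : ZMod p)) ∈ (∑ i, J i) ^ Fintype.card κ := by
    have h : ∀ j ∈ (Finset.univ : Finset κ), 1 - single (f j) (1 : ZMod p) ∈ ∑ i, J i := by
      intro j _
      refine one_sub_single_mem x hgen _ (fun i => ?_) _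
      have : J i ≤ ∑ i, J i := Finset.single_le_sum (f := J) (fun _ _ => bot_le) (Finset.mem_univ i)
      exact this (Ideal.subset_span rfl)
    simpa using Ideal.prod_mem_prod h
  have h0 : ∏ j, (1 - single (f j) (1 : ZMod p)) = 0 := by
    have h := Ideal.pow_le_pow_right hcard hprod
    rw [hI] at h
    simpa using h
  rw [Finset.prod_sub] at h0
  have h1 := congrArg (fun y => y.coeff 0) h0
  have hs : ∀ T : Finset κ, ∏ j ∈ T, single (f j) (1 : ZMod p) = single (∑ j ∈ T, f j) 1 := by
    intro T
    induction T using Finset.induction_on with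
    | empty => simp [one_def]
    | insert j T hj ih => rw [Finset.prod_insert hj, Finset.sum_insert hj, ih, single_mul_single]; simp
  simp only [hs] at h1
  rw [coeff_sum, Finsupp.finsetSum_apply, Finset.sum_eq_single ∅] at h1
  · simp [← one_def] at h1
  · intro T _ hT
    have hT' := hne T (Finset.nonempty_iff_ne_empty.2 hT)
    rcases neg_one_pow_eq_or (AddMonoidAlgebra (ZMod p) G) T.card with h | h <;>
      simp [h, hT']
  · simp

/-- Olson's bound for multisets. -/
theorem olson {G ι : Type*} [AddCommGroup G] [Fintype ι] (p : ℕ)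
    (hp : p.Prime) (x : ι → G) (e : ι → ℕ) (hx : ∀ i, p ^ e i • x i = 0)
    (hgen : AddSubgroup.closure (Set.range x) = ⊤) (S : Multiset G)
    (hcard : 1 + ∑ i, (p ^ e i - 1) ≤ Multiset.card S) :
    ∃ T ≤ S, T ≠ 0 ∧ T.sum = 0 := by
  classical
  obtain ⟨T, hT, hs⟩ := olson_family p hp x e hx hgen (fun j : S.ToType => j.1) (by simpa using hcard)
  refine ⟨T.val.map fun j : S.ToType => j.1, ?_, ?_, hs⟩
  · conv_rhs => rw [← Multiset.map_univ_coe S]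
    exact Multiset.map_le_map (Finset.val_le_iff.2 (Finset.subset_univ T))
  · simpa using hT.ne_empty

/-- With `n = p ^ a`, Olson's bound for `G` being `n + m` by `hm`: every sequence of length at least
`2n + m - 1` has a nonempty zero-sum subsequence of length at most `n`. -/
theorem exists_short {G ι : Type*} [AddCommGroup G] [Fintype ι] (p : ℕ)
    (hp : p.Prime) (x : ι → G) (e : ι → ℕ) (hx : ∀ i, p ^ e i • x i = 0)
    (hgen : AddSubgroup.closure (Set.range x) = ⊤) (a m : ℕ)
    (hm : ∑ i, (p ^ e i - 1) = p ^ a - 1 + m) (hbig : 1 + m ≤ p ^ a) (S : Multiset G)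
    (hcard : 2 * p ^ a + m ≤ Multiset.card S + 1) :
    ∃ T ≤ S, T ≠ 0 ∧ T.sum = 0 ∧ Multiset.card T ≤ p ^ a := by
  classical
  have hpa : 0 < p ^ a := pow_pos hp.pos _
  -- Only the first `2n + m - 1` terms are kept, so that no subsequence has length `3n`.
  obtain ⟨S', hS', hc'⟩ : ∃ S' ≤ S, Multiset.card S' = 2 * p ^ a + m - 1 := by
    refine ⟨(S.toList.take (2 * p ^ a + m - 1) : Multiset G), ?_, ?_⟩
    · conv_rhs => rw [← Multiset.coe_toList S]
      exact Multiset.coe_le.2 (List.take_sublist _ _).subperm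
    · rw [Multiset.coe_card, List.length_take, Multiset.length_toList]
      omega
  let y : Option ι → G × ZMod (p ^ a) := fun o => o.elim (0, 1) fun i => (x i, 0)
  have hy : AddSubgroup.closure (Set.range y) = ⊤ := by
    rw [eq_top_iff]
    rintro ⟨g, c⟩ -
    have h1 : ∀ g : G, (g, (0 : ZMod (p ^ a))) ∈ AddSubgroup.closure (Set.range y) := by
      intro g
      have hg : g ∈ AddSubgroup.closure (Set.range x) := by simp [hgen]
      have : AddSubgroup.closure (Set.range x) ≤
          (AddSubgroup.closure (Set.range y)).comap (AddMonoidHom.inl G (ZMod (p ^ a))) := by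
        rw [AddSubgroup.closure_le]
        rintro _ ⟨i, rfl⟩
        exact AddSubgroup.subset_closure ⟨some i, rfl⟩
      exact this hg
    have h2 : ((0 : G), c) ∈ AddSubgroup.closure (Set.range y) := by
      have h : ((0 : G), (1 : ZMod (p ^ a))) ∈ AddSubgroup.closure (Set.range y) :=
        AddSubgroup.subset_closure ⟨none, rfl⟩
      have : NeZero (p ^ a) := ⟨hpa.ne'⟩
      have h3 := AddSubgroup.nsmul_mem _ h c.val
      simpa using h3
    simpa using add_mem (h1 g) h2
  obtain ⟨T, hT, hs⟩ := olson_family p hp y (fun o => o.elim a e)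
    (by rintro (_ | i) <;> simp [y, hx]) hy
    (fun j : S'.ToType => (j.1, (1 : ZMod (p ^ a)))) (by
      rw [Fintype.sum_option]; simp [hm, hc']; omega)
  have hs1 : ∑ j ∈ T, j.1 = 0 := by simpa [Prod.fst_sum] using congrArg Prod.fst hs
  have hs2 : ((T.card : ℕ) : ZMod (p ^ a)) = 0 := by simpa [Prod.snd_sum] using congrArg Prod.snd hs
  rw [ZMod.natCast_eq_zero_iff] at hs2
  obtain ⟨k, hk⟩ := hs2
  set U : Multiset G := T.val.map fun j : S'.ToType => j.1 with hU
  have hUS : U ≤ S' := by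
    conv_rhs => rw [← Multiset.map_univ_coe S']
    exact Multiset.map_le_map (Finset.val_le_iff.2 (Finset.subset_univ T))
  have hUs : U.sum = 0 := hs1
  have hUc : Multiset.card U = p ^ a * k := by simp [hU, hk]
  have hU0 : U ≠ 0 := by simpa [hU] using hT.ne_empty
  have hle := Multiset.card_le_card hUS
  have hk3 : k < 3 := by
    by_contra! h
    have := Nat.mul_le_mul_left (p ^ a) h
    omega
  by_cases hk2 : k = 2
  · subst hk2
    obtain ⟨u, hu⟩ := Multiset.exists_mem_of_ne_zero hU0
    obtain ⟨V, hV, hV0, hVs⟩ := olson p hp x e hx hgen (U.erase u) (by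
      rw [Multiset.card_erase_of_mem hu, Nat.pred_eq_sub_one]; omega)
    have hVU : V ≤ U := hV.trans (Multiset.erase_le _ _)
    have hVc : Multiset.card V < Multiset.card U :=
      (Multiset.card_le_card hV).trans_lt (Multiset.card_erase_lt_of_mem hu)
    by_cases hVa : Multiset.card V ≤ p ^ a
    · exact ⟨V, (hVU.trans hUS).trans hS', hV0, hVs, hVa⟩
    · have hadd : U - V + V = U := Multiset.sub_add_cancel hVU
      have hc := Multiset.card_sub hVU
      refine ⟨U - V, (Multiset.sub_le_self _ _).trans (hUS.trans hS'), ?_, ?_, by omega⟩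
      · intro h
        rw [h] at hc
        simp at hc
        omega
      · have := congrArg Multiset.sum hadd
        simpa [hVs, hUs] using this
  · refine ⟨U, hUS.trans hS', hU0, hUs, ?_⟩
    have := Nat.mul_le_mul_left (p ^ a) (show k ≤ 1 by omega)
    omega

/-- Splitting off one zero-sum subsequence. -/
theorem HasDZS.cons {G : Type*} [AddCommGroup G] [DecidableEq G] {r : ℕ} {S T : Multiset G}
    (hT : T ≤ S) (hT0 : T ≠ 0) (hTs : T.sum = 0) (h : HasDZS r (S - T)) : HasDZS (r + 1) S := by
  obtain ⟨L, hL, hz, hle⟩ := h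
  refine ⟨T :: L, by simp [hL], ?_, ?_⟩
  · rintro U hU
    rcases List.mem_cons.1 hU with rfl | hU
    · exact ⟨hT0, hTs⟩
    · exact hz U hU
  · rw [List.sum_cons]
    calc T + L.sum ≤ T + (S - T) := add_le_add_right hle T
      _ = S := by rw [add_comm]; exact Multiset.sub_add_cancel hT

/-- The upper bound `D_r(G) ≤ r n + m` with `n = p ^ a`, stated for `r + 1` in place of `r`. -/
theorem hasDZS_of_le_card {G ι : Type*} [AddCommGroup G] [Fintype ι] (p : ℕ)
    (hp : p.Prime) (x : ι → G) (e : ι → ℕ) (hx : ∀ i, p ^ e i • x i = 0)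
    (hgen : AddSubgroup.closure (Set.range x) = ⊤) (a m : ℕ)
    (hm : ∑ i, (p ^ e i - 1) = p ^ a - 1 + m) (hbig : 1 + m ≤ p ^ a) (r : ℕ) :
    ∀ S : Multiset G, (r + 1) * p ^ a + m ≤ Multiset.card S → HasDZS (r + 1) S := by
  classical
  have hpa : 0 < p ^ a := pow_pos hp.pos _
  induction r with
  | zero =>
    intro S hS
    obtain ⟨T, hT, hT0, hTs⟩ := olson p hp x e hx hgen S (by omega)
    exact HasDZS.cons hT hT0 hTs ⟨[], by simp⟩
  | succ r ih =>
    intro S hS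
    have h2 : (r + 1 + 1) * p ^ a = (r + 1) * p ^ a + p ^ a := by ring
    have h3 : p ^ a ≤ (r + 1) * p ^ a := Nat.le_mul_of_pos_left _ (by omega)
    obtain ⟨T, hT, hT0, hTs, hTc⟩ := exists_short p hp x e hx hgen a m hm hbig S (by omega)
    refine HasDZS.cons hT hT0 hTs (ih _ ?_)
    have := Multiset.card_sub hT
    omega

/-- If `S` is made of the unit vectors of `∏ ZMod (N i)`, where all but the one of index `l` occur
fewer than `N i` times, then every nonempty zero-sum subsequence uses the `l`-th one at least `N l` times, so `r` disjoint ones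
need `r * N l` copies of it. -/
theorem not_hasDZS {ι : Type*} [Fintype ι] [DecidableEq ι] (N : ι → ℕ) (hN : ∀ i, 1 < N i)
    (l : ι) (c : ι → ℕ) (hc : ∀ i, i ≠ l → c i < N i) (r : ℕ) (hl : c l < r * N l) :
    ¬ HasDZS r (∑ i, Multiset.replicate (c i) (Pi.single i 1 : ∀ i, ZMod (N i))) := by
  let x : ι → ∀ i, ZMod (N i) := fun i => Pi.single i 1
  have hinj : Function.Injective x := by
    intro i j hij
    by_contra hne
    have : Fact (1 < N i) := ⟨hN i⟩
    have := congrFun hij i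
    simp [x, Pi.single_eq_of_ne hne] at this
  have hcount : ∀ j, (∑ i, Multiset.replicate (c i) (x i)).count (x j) = c j := by
    intro j
    simp [Multiset.count_sum', Multiset.count_replicate, hinj.eq_iff]
  -- The `j`-th coordinate of the sum counts the occurrences of the `j`-th unit vector.
  have hcoord : ∀ T : Multiset (∀ i, ZMod (N i)), (∀ g ∈ T, ∃ i, g = x i) →
      ∀ j, T.sum j = (T.count (x j) : ZMod (N j)) := by
    intro T
    induction T using Multiset.induction_on with
    | empty => simp
    | cons g T ih =>
      intro h j
      obtain ⟨i, rfl⟩ := h g (Multiset.mem_cons_self _ _)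
      rw [Multiset.sum_cons, Pi.add_apply, ih (fun g hg => h g (Multiset.mem_cons_of_mem hg)),
        Multiset.count_cons]
      by_cases hij : j = i
      · subst hij; simp [x, add_comm]
      · simp [x, Pi.single_eq_of_ne hij, hinj.ne hij]
  have hT : ∀ T ≤ ∑ i, Multiset.replicate (c i) (x i), T ≠ 0 → T.sum = 0 →
      N l ≤ T.count (x l) := by
    intro T hle h0 hs
    have hmem : ∀ g ∈ T, ∃ i, g = x i := by
      intro g hg
      have := Multiset.mem_of_le hle hg
      rw [Multiset.mem_sum] at this
      obtain ⟨i, -, hi⟩ := this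
      exact ⟨i, Multiset.eq_of_mem_replicate hi⟩
    have hdvd : ∀ j, N j ∣ T.count (x j) := by
      intro j
      rw [← ZMod.natCast_eq_zero_iff, ← hcoord T hmem j, hs]
      rfl
    obtain ⟨g, hg⟩ := Multiset.exists_mem_of_ne_zero h0
    obtain ⟨i, rfl⟩ := hmem g hg
    have hi : N i ≤ T.count (x i) := Nat.le_of_dvd (Multiset.count_pos.2 hg) (hdvd i)
    by_cases hil : i = l
    · exact hil ▸ hi
    · have h1 := Multiset.count_le_of_le (x i) hle
      rw [hcount] at h1
      have := hc i hil
      omega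
  rintro ⟨L, hL, hz, hle⟩
  have hsum : ∀ L : List (Multiset (∀ i, ZMod (N i))), (∀ T ∈ L, T ≠ 0 ∧ T.sum = 0) →
      L.sum ≤ ∑ i, Multiset.replicate (c i) (x i) → L.length * N l ≤ L.sum.count (x l) := by
    intro L
    induction L with
    | nil => simp
    | cons T L ih =>
      intro h hle
      rw [List.sum_cons] at hle ⊢
      have h1 := ih (fun U hU => h U (List.mem_cons_of_mem _ hU))
        ((Multiset.le_add_left _ _).trans hle)
      have h2 := hT T ((Multiset.le_add_right _ _).trans hle) (h T List.mem_cons_self).1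
        (h T List.mem_cons_self).2
      rw [Multiset.count_add, List.length_cons, add_mul, one_mul]
      omega
  have h1 := hsum L hz hle
  have h2 := Multiset.count_le_of_le (x l) hle
  rw [hcount] at h2
  rw [hL] at h1
  omega

theorem closure_single_eq_top {ι : Type*} [Fintype ι] [DecidableEq ι] (N : ι → ℕ)
    (hN : ∀ i, 0 < N i) :
    AddSubgroup.closure (Set.range fun i => (Pi.single i 1 : ∀ i, ZMod (N i))) = ⊤ := by
  rw [eq_top_iff]
  intro g _
  rw [← Finset.univ_sum_single g]
  refine AddSubgroup.sum_mem _ fun i _ => ?_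
  have : NeZero (N i) := ⟨(hN i).ne'⟩
  have h : (Pi.single i (g i) : ∀ i, ZMod (N i)) = (g i).val • Pi.single i 1 := by
    rw [← Pi.single_smul]; simp
  rw [h]
  exact AddSubgroup.nsmul_mem _ (AddSubgroup.subset_closure (Set.mem_range_self i)) _

/-- For a `p`-group `G = C_{p^{e_1}} × ⋯ × C_{p^{e_{d+1}}}` with
`e_1 ≤ ⋯ ≤ e_{d+1}` and `p^{e_{d+1}} ≥ 1 + ∑_{i≤d}(p^{e_i}-1)`, and any `r ≥ 1`,
`D_r(G) = r·p^{e_{d+1}} + ∑_{i≤d}(p^{e_i}-1)`. -/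
theorem stmt_13 (p d r : ℕ) (hp : p.Prime) (hr : 1 ≤ r) (e : Fin (d + 1) → ℕ)
    (hpos : ∀ i, 0 < e i) (hmono : Monotone e)
    (hbig : 1 + ∑ i : Fin d, (p ^ e i.castSucc - 1) ≤ p ^ e (Fin.last d)) :
    DavR (∀ i, ZMod (p ^ e i)) r =
      r * p ^ e (Fin.last d) + ∑ i : Fin d, (p ^ e i.castSucc - 1) := by
  set m := ∑ i : Fin d, (p ^ e i.castSucc - 1) with hm
  have hpa : 0 < p ^ e (Fin.last d) := pow_pos hp.pos _
  have hrp : 0 < r * p ^ e (Fin.last d) := Nat.mul_pos hr hpa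
  refine IsLeast.csInf_eq ⟨⟨by omega, ?_⟩, ?_⟩
  · obtain ⟨r, rfl⟩ := Nat.exists_eq_add_of_le' hr
    refine hasDZS_of_le_card p hp (fun i => Pi.single i 1) e (fun i => ?_)
      (closure_single_eq_top _ fun i => pow_pos hp.pos _) _ m ?_ hbig r
    · rw [← Pi.single_smul]
      simp
    · rw [Fin.sum_univ_castSucc, add_comm]
  · rintro k ⟨-, hk⟩
    by_contra! hlt
    let c : Fin (d + 1) → ℕ := Fin.snoc (fun i : Fin d => p ^ e i.castSucc - 1)
      (r * p ^ e (Fin.last d) - 1)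
    refine not_hasDZS (fun i => p ^ e i) (fun i => Nat.one_lt_pow (hpos i).ne' hp.one_lt)
      (Fin.last d) c ?_ r ?_ (hk _ ?_)
    · intro i hi
      obtain ⟨j, rfl⟩ := Fin.exists_castSucc_eq.2 hi
      have : 0 < p ^ e j.castSucc := pow_pos hp.pos _
      simp [c]; omega
    · simp [c]; omega
    · rw [Multiset.card_sum]
      simp only [Multiset.card_replicate]
      rw [Fin.sum_univ_castSucc]
      simp [c, ← hm]
      omega
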